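/- (Composition) The set of N-valid formulas is closed under modus ponens: for all propositional formulas φ and ψ, if φ is N-valid and φ → ψ is N-valid, then ψ is N-valid. -/

import Mathlib

/-! ## Dialogical logic: formulas, statements, moves -/

/-- Propositional formulas, built from atoms (indexed by `ℕ`) and `¬`, `∧`, `∨`, `→`. -/
inductive Formula : Type
  | atom : ℕ → Formula
  | neg : Formula → Formula
  | conj : Formula → Formula → Formula
  | disj : Formula → Formula → Formula
  | impl : Formula → Formula → Formula
  deriving DecidableEq, Inhabited

/-- Statements: formulas together with the three symbolic attacks `∧_L`, `∧_R` and `?`. -/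
inductive Statement : Type
  | form : Formula → Statement
  | conjL : Statement  -- the symbolic attack ∧_L
  | conjR : Statement  -- the symbolic attack ∧_R
  | question : Statement   -- the symbolic attack ?
  deriving DecidableEq, Inhabited

/-- A formula is atomic iff it is an atom. -/
def Formula.isAtomic : Formula → Prop
  | .atom _ => True
  | _ => False

/-- A move of a dialogue: a statement together with a reference.  The reference is
`none` for the initial move, `some (m, true)` for an attack on the assertion made at
move `m`, and `some (m, false)` for a defense against the attack made at move `m`. -/
structure Move : Type where
  stmt : Statement
  ref : Option (ℕ × Bool)
  deriving DecidableEq, Inhabited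

/-! ## Particle rules -/

/-- Particle rules, attacks: `Attacks a φ` holds when the statement `a` is an
admissible attack against the assertion `φ`. -/
inductive Attacks : Statement → Formula → Prop
  | conjL (φ ψ : Formula) : Attacks .conjL (.conj φ ψ)
  | conjR (φ ψ : Formula) : Attacks .conjR (.conj φ ψ)
  | disj (φ ψ : Formula) : Attacks .question (.disj φ ψ)
  | impl (φ ψ : Formula) : Attacks (.form φ) (.impl φ ψ)
  | neg (φ : Formula) : Attacks (.form φ) (.neg φ)

/-- Particle rules, defenses: `Defends s a φ` holds when the statement `s` is an
admissible defense of the assertion `φ` against the attack `a`.  (A negation admits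
no defense.) -/
inductive Defends : Statement → Statement → Formula → Prop
  | conjL (φ ψ : Formula) : Defends (.form φ) .conjL (.conj φ ψ)
  | conjR (φ ψ : Formula) : Defends (.form ψ) .conjR (.conj φ ψ)
  | disjL (φ ψ : Formula) : Defends (.form φ) .question (.disj φ ψ)
  | disjR (φ ψ : Formula) : Defends (.form ψ) .question (.disj φ ψ)
  | impl (φ ψ : Formula) : Defends (.form ψ) (.form φ) (.impl φ ψ)

/-! ## Dialogues

A (finite stage of a) dialogue is modelled as a list of moves; the move at index `i`
is the `i`-th move, made by Proponent P if `i` is even and by Opponent O if `i` is odd. -/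

/-- The skeletal dialogue conditions: move 0 is an assertion of a formula with no
reference, and every later move is an attack on, or a defense against, a specified
earlier move of the other player, in accordance with the particle rules; only
non-atomic assertions may be attacked. -/
def IsDialogue (d : List Move) : Prop :=
  (∀ _ : 0 < d.length, d[0]!.ref = none ∧ ∃ φ : Formula, d[0]!.stmt = .form φ) ∧
  (∀ i : ℕ, 0 < i → i < d.length →
    ∃ (m : ℕ) (z : Bool), d[i]!.ref = some (m, z) ∧ m < i ∧ m % 2 ≠ i % 2 ∧
      (z = true →
        ∃ φ : Formula, d[m]!.stmt = .form φ ∧ ¬ φ.isAtomic ∧ Attacks d[i]!.stmt φ) ∧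
      (z = false →
        ∃ (k : ℕ) (φ : Formula), d[m]!.ref = some (k, true) ∧ k < m ∧
          d[k]!.stmt = .form φ ∧ Defends d[i]!.stmt d[m]!.stmt φ))

/-- Rule D10: P may assert an atomic formula only if O has asserted it earlier. -/
def RuleD10 (d : List Move) : Prop :=
  ∀ i < d.length, i % 2 = 0 → ∀ a : ℕ, d[i]!.stmt = .form (.atom a) →
    ∃ j < i, j % 2 = 1 ∧ d[j]!.stmt = .form (.atom a)

/-- Rule D13: each P-assertion may be attacked at most once. -/
def RuleD13 (d : List Move) : Prop :=
  ∀ m : ℕ, m % 2 = 0 → ∀ i < d.length, ∀ j < d.length,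
    d[i]!.ref = some (m, true) → d[j]!.ref = some (m, true) → i = j

/-- Rule E: O may only react (attack or defend) against the immediately preceding
P-move. -/
def RuleE (d : List Move) : Prop :=
  ∀ i < d.length, i % 2 = 1 → ∃ z : Bool, d[i]!.ref = some (i - 1, z)

/-- The rule set N = {D10, D13}. -/
def NRules (d : List Move) : Prop := RuleD10 d ∧ RuleD13 d

/-- The rule set CL = {D10, D13, E}. -/
def CLRules (d : List Move) : Prop := RuleD10 d ∧ RuleD13 d ∧ RuleE d

/-- A dialogue commences with `φ` when its initial move is P's assertion of `φ`. -/
def CommencesWith (φ : Formula) (d : List Move) : Prop :=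
  0 < d.length ∧ d[0]!.stmt = .form φ

/-- An `S`-dialogue for `φ` (for a rule set `S`): a dialogue commencing with `φ`
that obeys the structural rules `S`.  These are exactly the branches (identified
with their underlying move sequences) of the `S`-dialogue tree for `φ`. -/
def SDialogueFor (S : List Move → Prop) (φ : Formula) (d : List Move) : Prop :=
  IsDialogue d ∧ S d ∧ CommencesWith φ d

/-- P wins a finite `S`-dialogue for `φ`: it ends with a P-move (the last index,
`d.length - 1`, is even, i.e. `d.length` is odd) and it cannot be extended by any
legal further (O-)move. -/
def WinsFor (S : List Move → Prop) (φ : Formula) (d : List Move) : Prop :=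
  SDialogueFor S φ d ∧ d.length % 2 = 1 ∧ ∀ m : Move, ¬ SDialogueFor S φ (d ++ [m])

/-- An `S`-winning strategy for P for `φ`, modelled as a set `T` of `S`-dialogues for
`φ`: the nodes of a rooted subtree of the `S`-dialogue tree for `φ`, each node being
identified with the dialogue leading from the root to it.  The conditions state that
`T` is a nonempty, prefix-closed set of `S`-dialogues for `φ` (hence a rooted subtree
of the `S`-dialogue tree with the same root), that every branch of `T` is a finite
`S`-dialogue won by P (leaves are wins for P, and there is no infinite branch), that
every node at odd depth (an O-move) has exactly one child, and that every node at
even depth (a P-move) has the same children in `T` as in the full dialogue tree. -/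
structure IsWinningStrategy (S : List Move → Prop) (φ : Formula) (T : Set (List Move)) : Prop where
  nonempty : T.Nonempty
  dialogues : ∀ d ∈ T, SDialogueFor S φ d
  prefix_closed : ∀ d ∈ T, ∀ e : List Move, e <+: d → 0 < e.length → e ∈ T
  leaf_wins : ∀ d ∈ T, (∀ m : Move, d ++ [m] ∉ T) → WinsFor S φ d
  no_infinite_branch : ∀ f : ℕ → Move, ∃ n : ℕ, 0 < n ∧ (List.ofFn fun i : Fin n => f i) ∉ T
  odd_unique_child : ∀ d ∈ T, 0 < d.length → d.length % 2 = 0 → ∃! m : Move, d ++ [m] ∈ T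
  even_all_children : ∀ d ∈ T, d.length % 2 = 1 →
    ∀ m : Move, SDialogueFor S φ (d ++ [m]) → d ++ [m] ∈ T

/-- `φ` is `S`-valid iff P has an `S`-winning strategy for `φ`. -/
def SValid (S : List Move → Prop) (φ : Formula) : Prop :=
  ∃ T : Set (List Move), IsWinningStrategy S φ T

/-- `φ` is N-valid (`⊨_N φ`) iff P has an N-winning strategy for `φ`. -/
def NValid (φ : Formula) : Prop := SValid NRules φ

namespace Comp

/-! Auxiliary semantics: `CF v φ` (can be made false), `CT v φ` (can be made true). -/
mutual
def CF (v : ℕ → Prop) : Formula → Prop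
  | .atom a => ¬ v a
  | .neg α => CT v α
  | .conj α β => CF v α ∨ CF v β
  | .disj α β => CF v α ∧ CF v β
  | .impl α β => CT v α ∧ CF v β
def CT (v : ℕ → Prop) : Formula → Prop
  | .atom a => v a
  | .neg α => CF v α
  | .conj _ _ => True
  | .disj _ _ => True
  | .impl _ _ => True
end

theorem CT_or_CF (v : ℕ → Prop) (φ : Formula) : CT v φ ∨ CF v φ := by
  induction φ with
  | atom a => simp only [CT, CF]; exact em _
  | neg α ih => simp only [CT, CF]; exact ih.symm
  | conj => simp [CT]
  | disj => simp [CT]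
  | impl => simp [CT]

theorem get_lt (d : List Move) (m : Move) (i : ℕ) (h : i < d.length) :
    (d ++ [m])[i]! = d[i]! := by
  have h' : i < (d ++ [m]).length := by simp; omega
  rw [getElem!_pos _ i h', getElem!_pos _ i h, List.getElem_append_left h]

theorem get_len (d : List Move) (m : Move) : (d ++ [m])[d.length]! = m := by
  have h' : d.length < (d ++ [m]).length := by simp
  rw [getElem!_pos (d ++ [m]) d.length h']; simp

def Legal (d : List Move) (m : Move) : Prop :=
  ∃ (k : ℕ) (z : Bool), m.ref = some (k, z) ∧ k < d.length ∧ k % 2 ≠ d.length % 2 ∧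
    (z = true → ∃ φ : Formula, d[k]!.stmt = .form φ ∧ ¬ φ.isAtomic ∧ Attacks m.stmt φ) ∧
    (z = false → ∃ (j : ℕ) (φ : Formula), d[k]!.ref = some (j, true) ∧ j < k ∧
          d[j]!.stmt = .form φ ∧ Defends m.stmt d[k]!.stmt φ) ∧
    (d.length % 2 = 0 → ∀ a : ℕ, m.stmt = .form (.atom a) →
      ∃ j < d.length, j % 2 = 1 ∧ d[j]!.stmt = .form (.atom a)) ∧
    (z = true → k % 2 = 0 → ∀ i < d.length, d[i]!.ref ≠ some (k, true))

theorem legal_of (φ : Formula) (d : List Move) (m : Move) (hd : 0 < d.length)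
    (h : SDialogueFor NRules φ (d ++ [m])) : SDialogueFor NRules φ d ∧ Legal d m := by
  obtain ⟨⟨h0, h1⟩, ⟨h10, h13⟩, hc, hc'⟩ := h
  have hL : (d ++ [m]).length = d.length + 1 := by simp
  rw [hL] at h0 h1 hc
  unfold RuleD10 at h10
  unfold RuleD13 at h13
  rw [hL] at h10 h13
  rw [get_lt d m 0 hd] at h0 hc'
  refine ⟨⟨⟨fun _ => h0 (by omega), ?_⟩, ⟨?_, ?_⟩, hd, hc'⟩, ?_⟩
  · intro i hi hi'
    obtain ⟨k, z, hr, hk, hp, ha, hb⟩ := h1 i hi (by omega)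
    rw [get_lt d m i hi'] at hr ha hb
    rw [get_lt d m k (by omega)] at ha hb
    refine ⟨k, z, hr, hk, hp, ha, fun hz => ?_⟩
    obtain ⟨j, χ, e1, e2, e3, e4⟩ := hb hz
    rw [get_lt d m j (by omega)] at e3
    exact ⟨j, χ, e1, e2, e3, e4⟩
  · intro i hi hp a ha
    obtain ⟨j, hj, hjp, e⟩ := h10 i (by omega) hp a (by rwa [get_lt d m i hi])
    rw [get_lt d m j (by omega)] at e
    exact ⟨j, hj, hjp, e⟩
  · intro k hk i hi j hj e1 e2
    exact h13 k hk i (by omega) j (by omega) (by rwa [get_lt d m i hi]) (by rwa [get_lt d m j hj])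
  · obtain ⟨k, z, hr, hk, hp, ha, hb⟩ := h1 d.length hd (by omega)
    rw [get_len] at hr ha hb
    rw [get_lt d m k hk] at ha hb
    refine ⟨k, z, hr, hk, hp, ha, fun hz => ?_, ?_, ?_⟩
    · obtain ⟨j, χ, e1, e2, e3, e4⟩ := hb hz
      rw [get_lt d m j (by omega)] at e3
      exact ⟨j, χ, e1, e2, e3, e4⟩
    · intro hp a ha
      obtain ⟨j, hj, hjp, e⟩ := h10 d.length (by omega) hp a (by rwa [get_len])
      rw [get_lt d m j (by omega)] at e
      exact ⟨j, hj, hjp, e⟩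
    · rintro rfl hk0 i hi e
      have := h13 k hk0 i (by omega) d.length (by omega) (by rwa [get_lt d m i hi])
        (by rwa [get_len])
      omega

theorem ref_lt {φ : Formula} {d : List Move} (h : SDialogueFor NRules φ d) {i k : ℕ} {z : Bool}
    (hi : i < d.length) (e : d[i]!.ref = some (k, z)) : k < i := by
  rcases Nat.eq_zero_or_pos i with rfl | h0
  · have := (h.1.1 hi).1
    rw [this] at e; cases e
  · obtain ⟨k', z', hr, hk, -⟩ := h.1.2 i h0 hi
    rw [hr] at e; cases e; exact hk

theorem of_legal (φ : Formula) (d : List Move) (m : Move)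
    (h : SDialogueFor NRules φ d) (hl : Legal d m) : SDialogueFor NRules φ (d ++ [m]) := by
  have hrl := @ref_lt φ d h
  obtain ⟨⟨h0, h1⟩, ⟨h10, h13⟩, hd, hc'⟩ := h
  obtain ⟨k, z, hr, hk, hp, ha, hb, hD10, hD13⟩ := hl
  have hL : (d ++ [m]).length = d.length + 1 := by simp
  refine ⟨⟨fun _ => ?_, ?_⟩, ⟨?_, ?_⟩, by omega, ?_⟩
  · rw [get_lt d m 0 hd]; exact h0 hd
  · intro i hi hi'
    rcases Nat.lt_or_ge i d.length with hlt | hge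
    · obtain ⟨k, z, hr, hk, hp, ha, hb⟩ := h1 i hi hlt
      refine ⟨k, z, ?_, hk, hp, ?_, ?_⟩
      · rwa [get_lt d m i hlt]
      · rwa [get_lt d m i hlt, get_lt d m k (by omega)]
      · intro hz
        obtain ⟨j, χ, e1, e2, e3, e4⟩ := hb hz
        refine ⟨j, χ, ?_, e2, ?_, ?_⟩
        · rwa [get_lt d m k (by omega)]
        · rwa [get_lt d m j (by omega)]
        · rwa [get_lt d m i hlt, get_lt d m k (by omega)]
    · obtain rfl : i = d.length := by omega
      rw [get_len]
      refine ⟨k, z, hr, hk, hp, ?_, ?_⟩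
      · rwa [get_lt d m k hk]
      · intro hz
        obtain ⟨j, χ, e1, e2, e3, e4⟩ := hb hz
        refine ⟨j, χ, ?_, e2, ?_, ?_⟩
        · rwa [get_lt d m k (by omega)]
        · rwa [get_lt d m j (by omega)]
        · rwa [get_lt d m k (by omega)]
  · intro i hi hp a ha
    rcases Nat.lt_or_ge i d.length with hlt | hge
    · rw [get_lt d m i hlt] at ha
      obtain ⟨j, hj, hjp, e⟩ := h10 i hlt hp a ha
      exact ⟨j, hj, hjp, by rwa [get_lt d m j (by omega)]⟩
    · obtain rfl : i = d.length := by omega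
      rw [get_len] at ha
      obtain ⟨j, hj, hjp, e⟩ := hD10 hp a ha
      exact ⟨j, hj, hjp, by rwa [get_lt d m j (by omega)]⟩
  · intro q hq i hi j hj e1 e2
    rcases Nat.lt_or_ge i d.length with hlt | hge
    · rw [get_lt d m i hlt] at e1
      rcases Nat.lt_or_ge j d.length with hlt' | hge'
      · rw [get_lt d m j hlt'] at e2
        exact h13 q hq i hlt j hlt' e1 e2
      · obtain rfl : j = d.length := by omega
        rw [get_len, hr] at e2
        cases e2
        exact absurd e1 (hD13 rfl hq i hlt)
    · obtain rfl : i = d.length := by omega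
      rw [get_len, hr] at e1
      cases e1
      rcases Nat.lt_or_ge j d.length with hlt' | hge'
      · rw [get_lt d m j hlt'] at e2
        exact absurd e2 (hD13 rfl hq j hlt')
      · omega
  · rwa [get_lt d m 0 hd]

/-! ### Soundness -/

def DEF (d : List Move) : Prop :=
  ∃ j < d.length, j % 2 = 0 ∧ ∃ k χ s, d[j]!.ref = some (k, true) ∧ k < j ∧
    d[k]!.stmt = .form χ ∧ Defends s d[j]!.stmt χ

structure INV (v : ℕ → Prop) (d : List Move) : Prop where
  a : ∀ i < d.length, i % 2 = 0 → ∀ δ, d[i]!.stmt = .form δ → CF v δ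
  b : ∀ i < d.length, i % 2 = 1 → ∀ δ, d[i]!.stmt = .form δ → CT v δ
  c : ∀ i < d.length, i % 2 = 1 → ∀ k < i, ∀ χ, d[i]!.ref = some (k, true) →
    d[k]!.stmt = .form χ → ∀ s, Defends (.form s) d[i]!.stmt χ → CF v s

theorem DEF.mono {d : List Move} (m : Move) (h : DEF d) : DEF (d ++ [m]) := by
  obtain ⟨j, hj, hp, k, χ, s, h1, h2, h3, h4⟩ := h
  refine ⟨j, by simp; omega, hp, k, χ, s, ?_, h2, ?_, ?_⟩
  · rwa [get_lt d m j hj]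
  · rwa [get_lt d m k (by omega)]
  · rwa [get_lt d m j hj]

theorem INV.snoc {v : ℕ → Prop} {d : List Move} {m : Move} (h : INV v d)
    (ha : d.length % 2 = 0 → ∀ δ, m.stmt = .form δ → CF v δ)
    (hb : d.length % 2 = 1 → ∀ δ, m.stmt = .form δ → CT v δ)
    (hc : d.length % 2 = 1 → ∀ k < d.length, ∀ χ, m.ref = some (k, true) →
      d[k]!.stmt = .form χ → ∀ s, Defends (.form s) m.stmt χ → CF v s) :
    INV v (d ++ [m]) := by
  have hL : (d ++ [m]).length = d.length + 1 := by simp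
  refine ⟨?_, ?_, ?_⟩
  · intro i hi
    rcases Nat.lt_or_ge i d.length with hlt | hge
    · rw [get_lt d m i hlt]; exact h.a i hlt
    · obtain rfl : i = d.length := by omega
      rw [get_len]; exact ha
  · intro i hi
    rcases Nat.lt_or_ge i d.length with hlt | hge
    · rw [get_lt d m i hlt]; exact h.b i hlt
    · obtain rfl : i = d.length := by omega
      rw [get_len]; exact hb
  · intro i hi hp k hk
    rcases Nat.lt_or_ge i d.length with hlt | hge
    · rw [get_lt d m i hlt, get_lt d m k (by omega)]; exact h.c i hlt hp k hk
    · obtain rfl : i = d.length := by omega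
      rw [get_len, get_lt d m k (by omega)]; exact hc hp k hk

/-- `O` always has a good reply. -/
theorem O_step {v : ℕ → Prop} {φ : Formula} {d : List Move} (hS : SDialogueFor NRules φ d)
    (hodd : d.length % 2 = 1)
    (h : DEF d ∨ (INV v d ∧ ∃ δ, d[d.length - 1]!.stmt = .form δ)) :
    ∃ m, SDialogueFor NRules φ (d ++ [m]) ∧ (DEF (d ++ [m]) ∨ INV v (d ++ [m])) := by
  rcases h with h | ⟨h, δ, hδ⟩
  · have h' := h
    obtain ⟨j, hj, hp, k, χ, s, h1, h2, h3, h4⟩ := h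
    refine ⟨⟨s, some (j, false)⟩, of_legal _ _ _ hS ?_, Or.inl (h'.mono _)⟩
    refine ⟨j, false, rfl, hj, by omega, by simp, fun _ => ⟨k, χ, h1, h2, h3, h4⟩, by omega, by simp⟩
  · have hcf := h.a _ (by omega) (by omega) δ hδ
    have key : ∀ a, ¬ δ.isAtomic → Attacks a δ → (∀ δ', a = .form δ' → CT v δ') →
        (∀ s, Defends (.form s) a δ → CF v s) →
        ∃ m, SDialogueFor NRules φ (d ++ [m]) ∧ (DEF (d ++ [m]) ∨ INV v (d ++ [m])) := by
      intro a hna hat hct hdf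
      refine ⟨⟨a, some (d.length - 1, true)⟩, of_legal _ _ _ hS ?_, Or.inr (h.snoc ?_ ?_ ?_)⟩
      · refine ⟨d.length - 1, true, rfl, by omega, by omega, fun _ => ⟨δ, hδ, hna, hat⟩, by simp,
          by omega, fun _ _ i hi e => ?_⟩
        have := ref_lt hS hi e
        omega
      · omega
      · intro _; exact hct
      · intro _ k hk χ e1 e2 s hs
        simp only [Option.some.injEq, Prod.mk.injEq, and_true] at e1
        subst e1
        rw [hδ] at e2
        cases e2
        exact hdf s hs
    cases δ with
    | atom a =>
      exfalso
      obtain ⟨j, hj, hjp, e⟩ := hS.2.1.1 (d.length - 1) (by omega) (by omega) a hδ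
      have := h.b j (by omega) hjp _ e
      simp only [CF, CT] at hcf this
      exact hcf this
    | neg α =>
      simp only [CF] at hcf
      refine key (.form α) (by simp [Formula.isAtomic]) (.neg _) ?_ ?_
      · intro δ' e; cases e; exact hcf
      · intro s hs; cases hs
    | conj α β =>
      simp only [CF] at hcf
      rcases hcf with hcf | hcf
      · refine key .conjL (by simp [Formula.isAtomic]) (.conjL _ _) (by simp) ?_
        intro s hs; cases hs; exact hcf
      · refine key .conjR (by simp [Formula.isAtomic]) (.conjR _ _) (by simp) ?_
        intro s hs; cases hs; exact hcf
    | disj α β =>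
      simp only [CF] at hcf
      refine key .question (by simp [Formula.isAtomic]) (.disj _ _) (by simp) ?_
      intro s hs; cases hs
      · exact hcf.1
      · exact hcf.2
    | impl α β =>
      simp only [CF] at hcf
      refine key (.form α) (by simp [Formula.isAtomic]) (.impl _ _) ?_ ?_
      · intro δ' e; cases e; exact hcf.1
      · intro s hs; cases hs; exact hcf.2

theorem P_step {v : ℕ → Prop} {φ : Formula} {d : List Move} {p : Move} (hd : 0 < d.length)
    (hS : SDialogueFor NRules φ (d ++ [p])) (hev : d.length % 2 = 0)
    (h : DEF d ∨ INV v d) :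
    DEF (d ++ [p]) ∨ (INV v (d ++ [p]) ∧
      ∃ δ, (d ++ [p])[(d ++ [p]).length - 1]!.stmt = .form δ) := by
  have hL : (d ++ [p]).length - 1 = d.length := by simp
  rcases h with h | h
  · exact Or.inl (h.mono _)
  obtain ⟨hSd, k, z, hr, hk, hp, ha, hb, -, -⟩ := legal_of _ _ _ hd hS
  rw [hL, get_len]
  suffices hs : DEF (d ++ [p]) ∨ ∃ δ, p.stmt = .form δ ∧ CF v δ by
    rcases hs with hs | ⟨δ, e, hδ⟩
    · exact Or.inl hs
    · refine Or.inr ⟨h.snoc ?_ (by omega) (by omega), δ, e⟩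
      intro _ δ' e'
      rw [e] at e'; cases e'; exact hδ
  cases z with
  | true =>
    obtain ⟨χ, e1, e2, e3⟩ := ha rfl
    have hct := h.b k hk (by omega) χ e1
    have key : ∀ s, Defends s p.stmt χ → DEF (d ++ [p]) := by
      intro s hs
      refine ⟨d.length, by simp, hev, k, χ, s, ?_, hk, ?_, ?_⟩
      · rwa [get_len]
      · rwa [get_lt d p k hk]
      · rwa [get_len]
    generalize p.stmt = st at *
    cases e3 with
    | conjL => exact Or.inl (key _ (.conjL _ _))
    | conjR => exact Or.inl (key _ (.conjR _ _))
    | disj => exact Or.inl (key _ (.disjL _ _))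
    | impl => exact Or.inl (key _ (.impl _ _))
    | neg => exact Or.inr ⟨_, rfl, by simpa only [CT] using hct⟩
  | false =>
    obtain ⟨j, χ, e1, e2, e3, e4⟩ := hb rfl
    right
    have hform : ∃ s, p.stmt = .form s := by
      generalize p.stmt = st at *
      generalize d[k]!.stmt = st' at *
      cases e4 <;> exact ⟨_, rfl⟩
    obtain ⟨s, hs⟩ := hform
    rw [hs] at e4
    exact ⟨s, hs, h.c k hk (by omega) j e2 χ e1 e3 s e4⟩

theorem no_inf {T : Set (List Move)}
    (hT : ∀ f : ℕ → Move, ∃ n : ℕ, 0 < n ∧ (List.ofFn fun i : Fin n => f i) ∉ T)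
    (G : List Move → Prop) (hGT : ∀ d, G d → d ∈ T) (hstep : ∀ d, G d → ∃ m, G (d ++ [m]))
    (d0 : List Move) (hd0 : d0.length = 1) (h0 : G d0) : False := by
  choose! nx hnx using hstep
  let x : ℕ → List Move := fun n => Nat.rec d0 (fun _ d => d ++ [nx d]) n
  have hx : ∀ n, x (n + 1) = x n ++ [nx (x n)] := fun n => rfl
  have hG : ∀ n, G (x n) := by
    intro n
    induction n with
    | zero => exact h0
    | succ n ih => rw [hx]; exact hnx _ ih
  have hlen : ∀ n, (x n).length = n + 1 := by
    intro n
    induction n with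
    | zero => exact hd0
    | succ n ih => rw [hx]; simp [ih]
  let f : ℕ → Move := fun i => (x i)[i]!
  have hf : ∀ n, (List.ofFn fun i : Fin (n + 1) => f i) = x n := by
    intro n
    induction n with
    | zero =>
      obtain ⟨a, ha⟩ := List.length_eq_one_iff.mp hd0
      have : x 0 = [a] := ha
      simp [f, this]
    | succ n ih =>
      rw [List.ofFn_succ_last, hx]
      have h2 : f (n + 1) = nx (x n) := by
        have := get_len (x n) (nx (x n))
        rw [hlen, ← hx] at this
        exact this
      simp only [Fin.val_castSucc, Fin.val_last]
      rw [h2]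
      congr 1
  obtain ⟨n, hn, hnT⟩ := hT f
  obtain ⟨n, rfl⟩ : ∃ k, n = k + 1 := ⟨n - 1, by omega⟩
  rw [hf] at hnT
  exact hnT (hGT _ (hG n))

theorem sound {φ : Formula} (h : NValid φ) (v : ℕ → Prop) : ¬ CF v φ := by
  intro hcf
  obtain ⟨T, hT⟩ := h
  obtain ⟨d, hd⟩ := hT.nonempty
  have hSd := hT.dialogues d hd
  have hpos : 0 < d.length := hSd.2.2.1
  have hpre : [d[0]!] <+: d := by
    cases d with
    | nil => simp at hpos
    | cons a t => simp
  have hroot := hT.prefix_closed d hd _ hpre (by simp)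
  refine no_inf hT.no_infinite_branch
    (fun e => e ∈ T ∧ 0 < e.length ∧
      ((e.length % 2 = 1 ∧ (DEF e ∨ (INV v e ∧ ∃ δ, e[e.length - 1]!.stmt = .form δ))) ∨
       (e.length % 2 = 0 ∧ (DEF e ∨ INV v e)))) (fun _ h => h.1) ?_ [d[0]!] (by simp) ?_
  · rintro e ⟨heT, hpos, ⟨hp, h⟩ | ⟨hp, h⟩⟩
    · obtain ⟨m, hm, hm'⟩ := O_step (hT.dialogues e heT) hp h
      exact ⟨m, hT.even_all_children e heT hp m hm, by simp, Or.inr ⟨by simp; omega, hm'⟩⟩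
    · obtain ⟨m, hm, -⟩ := hT.odd_unique_child e heT hpos hp
      exact ⟨m, hm, by simp, Or.inl ⟨by simp; omega, P_step hpos (hT.dialogues _ hm) hp h⟩⟩
  · refine ⟨hroot, by simp, Or.inl ⟨by simp, Or.inr ⟨⟨?_, ?_, ?_⟩, φ, ?_⟩⟩⟩
    · intro i hi _ δ e
      obtain rfl : i = 0 := by simpa using hi
      have := hSd.2.2.2
      simp only [List.getElem!_cons_zero] at e
      rw [this] at e; cases e; exact hcf
    · intro i hi hp
      simp at hi; omega
    · intro i hi hp
      simp at hi; omega
    · simpa using hSd.2.2.2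

/-! ### Completeness -/

def W (φ : Formula) : ℕ → List Move → Prop
  | 0, _ => False
  | n + 1, d => SDialogueFor NRules φ d ∧ d.length % 2 = 1 ∧
      ∀ m, SDialogueFor NRules φ (d ++ [m]) → ∃ p, W φ n (d ++ [m] ++ [p])

theorem W.dia {φ : Formula} {n : ℕ} {d : List Move} (h : W φ n d) :
    SDialogueFor NRules φ d ∧ d.length % 2 = 1 := by
  cases n with
  | zero => exact h.elim
  | succ n => exact ⟨h.1, h.2.1⟩

open Classical in
noncomputable def gch (φ : Formula) (e : List Move) : Move :=
  if h : ∃ n p, W φ n (e ++ [p]) then (Nat.find_spec h).choose else default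

theorem gch_spec {φ : Formula} {e : List Move} {n : ℕ} {p : Move} (h : W φ n (e ++ [p])) :
    ∃ n' ≤ n, W φ n' (e ++ [gch φ e]) := by
  classical
  have h' : ∃ n p, W φ n (e ++ [p]) := ⟨n, p, h⟩
  refine ⟨Nat.find h', Nat.find_min' h' ⟨p, h⟩, ?_⟩
  unfold gch
  rw [dif_pos h']
  exact (Nat.find_spec h').choose_spec

inductive TT (φ : Formula) : List Move → Prop
  | root : TT φ [⟨.form φ, none⟩]
  | o (d : List Move) (m : Move) : TT φ d → d.length % 2 = 1 →
      SDialogueFor NRules φ (d ++ [m]) → TT φ (d ++ [m])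
  | p (d : List Move) : TT φ d → d.length % 2 = 0 → TT φ (d ++ [gch φ d])

theorem TT.facts {φ : Formula} {n : ℕ} (hW : W φ n [⟨.form φ, none⟩]) {d : List Move}
    (h : TT φ d) : SDialogueFor NRules φ d ∧ 0 < d.length ∧ (d.length % 2 = 1 → ∃ n, W φ n d) ∧
      (d.length % 2 = 0 → ∃ n p, W φ n (d ++ [p])) := by
  induction h with
  | root => exact ⟨hW.dia.1, by simp, fun _ => ⟨n, hW⟩, by simp⟩
  | o d m hd hp hS ih =>
    refine ⟨hS, by simp, by simp; omega, fun _ => ?_⟩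
    obtain ⟨n, hn⟩ := ih.2.2.1 hp
    cases n with
    | zero => exact hn.elim
    | succ n => exact ⟨n, hn.2.2 m hS⟩
  | p d hd hp ih =>
    obtain ⟨n, p, hn⟩ := ih.2.2.2 hp
    obtain ⟨n', -, hn'⟩ := gch_spec hn
    exact ⟨hn'.dia.1, by simp, fun _ => ⟨_, hn'⟩, by simp; omega⟩

theorem TT.inv {φ : Formula} {d : List Move} {m : Move} (h : TT φ (d ++ [m])) (hd : 0 < d.length) :
    TT φ d ∧ (d.length % 2 = 0 → m = gch φ d) := by
  generalize he : d ++ [m] = e at h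
  cases h with
  | root =>
    have := congrArg List.length he
    simp at this; subst this; simp at hd
  | o d' m' h1 h2 h3 =>
    obtain ⟨rfl, h⟩ := List.append_inj' he rfl
    exact ⟨h1, by omega⟩
  | p d' h1 h2 =>
    obtain ⟨rfl, h⟩ := List.append_inj' he rfl
    exact ⟨h1, fun _ => by simpa using h⟩

theorem ofFn_snoc (f : ℕ → Move) (n : ℕ) :
    (List.ofFn fun i : Fin (n + 1) => f i) = (List.ofFn fun i : Fin n => f i) ++ [f n] := by
  rw [List.ofFn_succ_last]; simp

theorem TT.fin {φ : Formula} (f : ℕ → Move)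
    (hall : ∀ k, 0 < k → TT φ (List.ofFn fun i : Fin k => f i)) : ∀ (n : ℕ) (k : ℕ),
    ∀ m ≤ n, W φ m (List.ofFn fun i : Fin k => f i) → 0 < k → k % 2 = 1 → False := by
  intro n
  induction n with
  | zero =>
    intro k m hm h
    obtain rfl : m = 0 := by omega
    exact h.elim
  | succ n ih =>
    intro k m hm h hk hk1
    cases m with
    | zero => exact h.elim
    | succ m =>
      have t2 := hall (k + 2) (by omega)
      rw [ofFn_snoc] at t2
      have t1 := t2.inv (by simp)
      have t1' := t1.1
      have hS : SDialogueFor NRules φ (List.ofFn fun i : Fin (k + 1) => f i) := by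
        generalize hgen : (List.ofFn fun i : Fin (k + 1) => f i) = e at t1'
        have hlen : e.length = k + 1 := by rw [← hgen]; simp
        cases t1' with
        | root => simp at hlen; omega
        | o d m _ _ hS => exact hS
        | p d _ h2 => simp at hlen; omega
      have hS' := hS
      rw [ofFn_snoc] at hS'
      obtain ⟨p, hp⟩ := h.2.2 _ hS'
      rw [← ofFn_snoc] at hp
      obtain ⟨n', hn', hw⟩ := gch_spec hp
      rw [← t1.2 (by simp; omega), ← ofFn_snoc] at hw
      exact ih (k + 2) n' (by omega) hw (by omega) (by omega)

theorem valid_of_W {φ : Formula} {n : ℕ} (hW : W φ n [⟨.form φ, none⟩]) : NValid φ := by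
  refine ⟨{d | TT φ d}, ⟨⟨_, .root⟩, fun d h => (TT.facts hW h).1, ?_, ?_, ?_, ?_, ?_⟩⟩
  · intro d hd
    induction hd with
    | root =>
      intro e he hpos
      have : e = [⟨.form φ, none⟩] := he.eq_of_length (by
        have := he.length_le
        simp at this ⊢; omega)
      rw [this]; exact .root
    | o d m h1 h2 h3 ih =>
      intro e he hpos
      rcases List.prefix_concat_iff.mp he with rfl | he
      · exact .o d m h1 h2 h3
      · exact ih e he hpos
    | p d h1 h2 ih =>
      intro e he hpos
      rcases List.prefix_concat_iff.mp he with rfl | he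
      · exact .p d h1 h2
      · exact ih e he hpos
  · intro d hd hm
    have hodd : d.length % 2 = 1 := by
      by_contra hne
      exact hm _ (.p d hd (by omega))
    exact ⟨(TT.facts hW hd).1, hodd, fun m hS => hm m (.o d m hd hodd hS)⟩
  · intro f
    by_contra hcon
    push Not at hcon
    have hall : ∀ k, 0 < k → TT φ (List.ofFn fun i : Fin k => f i) := hcon
    obtain ⟨n, hn⟩ := (TT.facts hW (hall 1 (by omega))).2.2.1 (by simp)
    exact TT.fin f hall n 1 n le_rfl hn (by omega) (by omega)
  · intro d hd _ hev
    exact ⟨_, .p d hd hev, fun m hm => (TT.inv hm (TT.facts hW hd).2.1).2 hev⟩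
  · intro d hd hodd m hS
    exact .o d m hd hodd hS

def sz : Formula → ℕ
  | .atom _ => 1
  | .neg α => sz α + 1
  | .conj α β => sz α + sz β + 1
  | .disj α β => sz α + sz β + 1
  | .impl α β => sz α + sz β + 1

def szL (L : List Formula) : ℕ := (L.map sz).sum

theorem sz_pos (φ : Formula) : 0 < sz φ := by cases φ <;> simp [sz]

/-- `P` may assert `s` next (up to D10), without opening a defence for `O`. -/
def Avail (d : List Move) (s : Formula) : Prop :=
  ∃ k < d.length, k % 2 = 1 ∧ (d[k]!.stmt = .form (.neg s) ∨
    ∃ j < k, ∃ χ, d[k]!.ref = some (j, true) ∧ d[j]!.stmt = .form χ ∧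
      Defends (.form s) d[k]!.stmt χ)

theorem Avail.mono {d : List Move} (m : Move) {s : Formula} (h : Avail d s) :
    Avail (d ++ [m]) s := by
  obtain ⟨k, hk, hp, h⟩ := h
  refine ⟨k, by simp; omega, hp, ?_⟩
  rw [get_lt d m k hk]
  refine h.imp id ?_
  rintro ⟨j, hj, χ, h1, h2, h3⟩
  exact ⟨j, hj, χ, h1, by rwa [get_lt d m j (by omega)], h3⟩

structure Clean (d : List Move) : Prop where
  att : ∀ k < d.length, k % 2 = 0 → ∀ δ, d[k]!.stmt = .form δ → ¬ δ.isAtomic →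
    ∃ i < d.length, d[i]!.ref = some (k, true)
  ng : ∀ k < d.length, k % 2 = 0 → ∀ j < k, d[k]!.ref = some (j, true) →
    ∃ χ, d[j]!.stmt = .form (.neg χ)

def NgMove (d : List Move) (p : Move) : Prop :=
  ∀ j < d.length, p.ref = some (j, true) → ∃ χ, d[j]!.stmt = .form (.neg χ)

def Asserted (d : List Move) (a : ℕ) : Prop :=
  ∃ j < d.length, j % 2 = 1 ∧ d[j]!.stmt = .form (.atom a)

/-- The only legal `O` reply attacks the last move. -/
theorem O_forced {d : List Move} {p m : Move} {δ : Formula}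
    (hc : Clean d) (hev : d.length % 2 = 0) (hp : p.stmt = .form δ) (hng : NgMove d p)
    (hl : Legal (d ++ [p]) m) :
    m.ref = some (d.length, true) ∧ ¬ δ.isAtomic ∧ Attacks m.stmt δ := by
  have hL : (d ++ [p]).length = d.length + 1 := by simp
  obtain ⟨k, z, hr, hk, hpar, ha, hb, -, h13⟩ := hl
  rw [hL] at hk hpar h13
  cases z with
  | true =>
    obtain ⟨χ, e1, e2, e3⟩ := ha rfl
    rcases Nat.lt_or_ge k d.length with hlt | hge
    · exfalso
      rw [get_lt d p k hlt] at e1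
      obtain ⟨i, hi, e⟩ := hc.att k hlt (by omega) χ e1 e2
      exact h13 rfl (by omega) i (by omega) (by rwa [get_lt d p i hi])
    · obtain rfl : k = d.length := by omega
      rw [get_len, hp] at e1
      cases e1
      exact ⟨hr, e2, e3⟩
  | false =>
    exfalso
    obtain ⟨j, χ, e1, e2, e3, e4⟩ := hb rfl
    have : ∃ χ', d[j]!.stmt = .form (.neg χ') := by
      rcases Nat.lt_or_ge k d.length with hlt | hge
      · rw [get_lt d p k hlt] at e1
        exact hc.ng k hlt (by omega) j e2 e1
      · obtain rfl : k = d.length := by omega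
        rw [get_len] at e1
        exact hng j e2 e1
    obtain ⟨χ', e⟩ := this
    rw [get_lt d p j (by omega), e] at e3
    cases e3
    generalize m.stmt = st at *
    generalize (d ++ [p])[k]!.stmt = st' at *
    cases e4

theorem Clean.next {d : List Move} {p m : Move}
    (hc : Clean d) (hev : d.length % 2 = 0) (hng : NgMove d p)
    (hm : m.ref = some (d.length, true)) : Clean (d ++ [p] ++ [m]) := by
  have hL : (d ++ [p]).length = d.length + 1 := by simp
  have hL2 : (d ++ [p] ++ [m]).length = d.length + 2 := by simp
  have g1 : ∀ i < d.length, (d ++ [p] ++ [m])[i]! = d[i]! := fun i hi => by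
    rw [get_lt _ _ _ (by omega), get_lt _ _ _ hi]
  have g2 : (d ++ [p] ++ [m])[d.length]! = p := by
    rw [get_lt _ _ _ (by omega), get_len]
  have g3 : (d ++ [p] ++ [m])[d.length + 1]! = m := by
    rw [← hL, get_len]
  refine ⟨?_, ?_⟩
  · intro k hk hk0 δ e hna
    rcases Nat.lt_or_ge k d.length with hlt | hge
    · rw [g1 k hlt] at e
      obtain ⟨i, hi, e'⟩ := hc.att k hlt hk0 δ e hna
      exact ⟨i, by omega, by rwa [g1 i hi]⟩
    · obtain rfl : k = d.length := by omega
      exact ⟨d.length + 1, by omega, by rwa [g3]⟩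
  · intro k hk hk0 j hj e
    rcases Nat.lt_or_ge k d.length with hlt | hge
    · rw [g1 k hlt] at e
      rw [g1 j (by omega)]
      exact hc.ng k hlt hk0 j hj e
    · obtain rfl : k = d.length := by omega
      rw [g2] at e
      rw [g1 j hj]
      exact hng j hj e

/-- An available formula can actually be asserted. -/
theorem Avail.move {φ : Formula} {d : List Move} {s : Formula} (h : Avail d s)
    (hS : SDialogueFor NRules φ d) (hev : d.length % 2 = 0)
    (hat : ∀ a, s = .atom a → Asserted d a) :
    ∃ p, p.stmt = .form s ∧ NgMove d p ∧ SDialogueFor NRules φ (d ++ [p]) := by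
  have hat' : ∀ a, Statement.form s = .form (.atom a) →
      ∃ j < d.length, j % 2 = 1 ∧ d[j]!.stmt = .form (.atom a) := by
    intro a e; cases e; exact hat a rfl
  obtain ⟨k, hk, hp, h | ⟨j, hj, χ, h1, h2, h3⟩⟩ := h
  · refine ⟨⟨.form s, some (k, true)⟩, rfl, ?_, of_legal _ _ _ hS ?_⟩
    · intro j hj e
      cases e
      exact ⟨_, h⟩
    · exact ⟨k, true, rfl, hk, by omega,
        fun _ => ⟨_, h, by simp [Formula.isAtomic], .neg _⟩, by simp, fun _ => hat', by omega⟩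
  · refine ⟨⟨.form s, some (k, false)⟩, rfl, ?_, of_legal _ _ _ hS ?_⟩
    · intro j hj e
      simp at e
    · exact ⟨k, false, rfl, hk, by omega, by simp, fun _ => ⟨j, χ, h1, hj, h2, h3⟩,
        fun _ => hat', by simp⟩

def leftN : Formula → List Formula
  | .neg γ => [γ]
  | _ => []

theorem leftN_sz (α : Formula) : szL (leftN α) < sz α := by
  cases α <;> simp [leftN, szL, sz]

theorem leftN_spec {v : ℕ → Prop} {α : Formula} (hv : ∀ a, α = .atom a → v a)
    (h : ∀ γ ∈ leftN α, CF v γ) : CT v α := by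
  cases α <;> simp_all [leftN, CT]

/-- Formulas newly available after `O` attacks `δ` by `a`. -/
theorem new_formulas {a : Statement} {δ : Formula} (h : Attacks a δ) :
    ∃ N : List Formula, szL N < sz δ ∧
      (∀ s ∈ N, a = .form (.neg s) ∨ Defends (.form s) a δ) ∧
      (∀ v, (∀ b, a = .form (.atom b) → v b) → (∀ s ∈ N, CF v s) → CF v δ) := by
  cases h with
  | conjL α β =>
    refine ⟨[α], by simp [szL, sz], ?_, ?_⟩
    · intro s hs; simp at hs; subst hs; exact Or.inr (.conjL _ _)
    · intro v _ h; simp only [CF]; exact Or.inl (h α (by simp))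
  | conjR α β =>
    refine ⟨[β], by simp [szL, sz], ?_, ?_⟩
    · intro s hs; simp at hs; subst hs; exact Or.inr (.conjR _ _)
    · intro v _ h; simp only [CF]; exact Or.inr (h β (by simp))
  | disj α β =>
    refine ⟨[α, β], by simp [szL, sz], ?_, ?_⟩
    · intro s hs
      simp at hs
      rcases hs with rfl | rfl
      · exact Or.inr (.disjL _ _)
      · exact Or.inr (.disjR _ _)
    · intro v _ h; simp only [CF]; exact ⟨h α (by simp), h β (by simp)⟩
  | impl α β =>
    refine ⟨β :: leftN α, ?_, ?_, ?_⟩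
    · have := leftN_sz α
      simp only [szL, sz, List.map_cons, List.sum_cons] at *
      omega
    · intro s hs
      rcases List.mem_cons.mp hs with rfl | hs
      · exact Or.inr (.impl _ _)
      · left
        cases α <;> simp_all [leftN]
    · intro v hv h
      simp only [CF]
      exact ⟨leftN_spec (fun b e => hv b (by rw [e])) fun γ hγ => h γ (by simp [hγ]),
        h β (by simp)⟩
  | neg α =>
    refine ⟨leftN α, ?_, ?_, ?_⟩
    · have := leftN_sz α
      simp only [sz]; omega
    · intro s hs
      left
      cases α <;> simp_all [leftN]
    · intro v hv h
      simp only [CF]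
      exact leftN_spec (fun b e => hv b (by rw [e])) h

theorem szL_erase {L : List Formula} {δ : Formula} (h : δ ∈ L) :
    szL (δ :: L.erase δ) = szL L := by
  unfold szL
  exact ((List.perm_cons_erase h).map sz).sum_eq.symm

theorem main_win (φ : Formula) : ∀ (N : ℕ) (d : List Move) (p : Move) (δ : Formula)
    (L : List Formula), szL (δ :: L) ≤ N → Clean d → d.length % 2 = 0 →
    SDialogueFor NRules φ (d ++ [p]) → p.stmt = .form δ → NgMove d p →
    (∀ s ∈ L, Avail d s) →
    (∀ v : ℕ → Prop, (∀ a, Asserted d a → v a) → (∀ s ∈ δ :: L, CF v s) → False) →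
    W φ N (d ++ [p]) := by
  intro N
  induction N with
  | zero =>
    intro d p δ L h
    have := sz_pos δ
    simp [szL] at h
    omega
  | succ N ih =>
    intro d p δ L hsz hc hev hS hp hng hav hval
    refine ⟨hS, by simp; omega, fun m hSm => ?_⟩
    obtain ⟨hmr, hna, hat⟩ := O_forced hc hev hp hng (legal_of _ _ _ (by simp) hSm).2
    have hc2 := hc.next hev hng hmr
    obtain ⟨New, hNsz, hNav, hNval⟩ := new_formulas hat
    have hL : (d ++ [p]).length = d.length + 1 := by simp
    have hL2 : (d ++ [p] ++ [m]).length = d.length + 2 := by simp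
    have g1 : ∀ i < d.length, (d ++ [p] ++ [m])[i]! = d[i]! := fun i hi => by
      rw [get_lt _ _ _ (by omega), get_lt _ _ _ hi]
    have g2 : (d ++ [p] ++ [m])[d.length]! = p := by
      rw [get_lt _ _ _ (by omega), get_len]
    have g3 : (d ++ [p] ++ [m])[d.length + 1]! = m := by
      rw [← hL, get_len]
    have hav2 : ∀ s ∈ New ++ L, Avail (d ++ [p] ++ [m]) s := by
      intro s hs
      rcases List.mem_append.mp hs with hs | hs
      · refine ⟨d.length + 1, by omega, by omega, ?_⟩
        rw [g3]
        refine (hNav s hs).imp id fun h => ?_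
        exact ⟨d.length, by omega, δ, hmr, by rw [g2, hp], h⟩
      · exact ((hav s hs).mono p).mono m
    have hval2 : ∀ v : ℕ → Prop, (∀ a, Asserted (d ++ [p] ++ [m]) a → v a) →
        (∀ s ∈ New ++ L, CF v s) → False := by
      intro v hv h
      refine hval v ?_ ?_
      · rintro a ⟨j, hj, hj1, e⟩
        exact hv a ⟨j, by omega, hj1, by rwa [g1 j hj]⟩
      · intro s hs
        rcases List.mem_cons.mp hs with rfl | hs
        · refine hNval v (fun b e => hv b ⟨d.length + 1, by omega, by omega, by rwa [g3]⟩) ?_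
          exact fun s hs => h s (List.mem_append_left _ hs)
        · exact h s (List.mem_append_right _ hs)
    have hsz2 : szL (New ++ L) ≤ N := by
      simp only [szL, List.map_append, List.sum_append, List.map_cons, List.sum_cons] at *
      omega
    have hgo : ∀ s ∈ New ++ L, (∀ a, s = .atom a → Asserted (d ++ [p] ++ [m]) a) →
        ∃ p', W φ N (d ++ [p] ++ [m] ++ [p']) := by
      intro s hs hatm
      obtain ⟨p', e1, e2, e3⟩ := (hav2 s hs).move hSm (by omega) hatm
      refine ⟨p', ih _ p' s ((New ++ L).erase s) (by rw [szL_erase hs]; exact hsz2) hc2 (by omega)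
        e3 e1 e2 (fun s' hs' => hav2 s' (List.mem_of_mem_erase hs')) ?_⟩
      intro v hv h
      refine hval2 v hv fun s' hs' => h s' ?_
      exact (List.perm_cons_erase hs).subset hs'
    by_cases hex : ∃ s ∈ New ++ L, ∀ a, s = .atom a → Asserted (d ++ [p] ++ [m]) a
    · obtain ⟨s, hs, h⟩ := hex
      exact hgo s hs h
    · exfalso
      push Not at hex
      refine hval2 (Asserted (d ++ [p] ++ [m])) (fun _ h => h) fun s hs => ?_
      obtain ⟨a, rfl, h⟩ := hex s hs
      simpa only [CF] using h

theorem complete {φ : Formula} (h : ∀ v, ¬ CF v φ) : NValid φ := by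
  refine valid_of_W (n := szL [φ]) ?_
  refine main_win φ _ [] ⟨.form φ, none⟩ φ [] le_rfl ⟨by simp, by simp⟩ (by simp) ?_ rfl ?_
    (by simp) ?_
  · refine ⟨⟨fun _ => ⟨rfl, φ, rfl⟩, ?_⟩, ⟨?_, ?_⟩, by simp, rfl⟩
    · intro i hi hi'
      simp at hi'; omega
    · intro i hi _ a e
      obtain rfl : i = 0 := by simpa using hi
      simp at e
      subst e
      exact absurd (by simp [CF]) (h (fun _ => False))
    · intro k _ i hi j hj _ _
      simp at hi hj; omega
  · intro j hj; simp at hj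
  · intro v _ hv
    exact h v (hv φ (by simp))

end Comp

/-- **Composition.** The set of N-valid formulas is closed under
modus ponens: if `φ` and `φ → ψ` are N-valid, then so is `ψ`. -/
theorem composition (φ ψ : Formula) (h1 : NValid φ)
    (h2 : NValid (Formula.impl φ ψ)) : NValid ψ := by
  refine Comp.complete fun v hv => ?_
  have a := Comp.sound h1 v
  have b := Comp.sound h2 v
  simp only [Comp.CF] at b
  exact b ⟨(Comp.CT_or_CF v φ).resolve_right a, hv⟩
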